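/- If N = [[A,B],[C,D]] is a J-unitary operator on K, then D*D = 1 + B*B and DD* = 1 + CC*; consequently D is invertible with ‖D⁻¹‖ ≤ 1, the identity (D⁻¹C)(D⁻¹C)* = 1 − D⁻¹(D⁻¹)* holds, and ‖D⁻¹C‖ < 1. -/

import Mathlib

open ContinuousLinearMap

noncomputable section

variable {H : Type*} [NormedAddCommGroup H] [InnerProductSpace ℂ H] [CompleteSpace H]

/-- The Hilbert space `K = H ⊕ H` (with the `ℓ²` product norm). -/
abbrev Kspace (H : Type*) [NormedAddCommGroup H] [InnerProductSpace ℂ H] : Type _ :=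
  WithLp 2 (H × H)

/-- The block operator `[[A,B],[C,D]]` on `K`, acting by `(x,y) ↦ (Ax + By, Cx + Dy)`. -/
def blockOp (A B C D : H →L[ℂ] H) : Kspace H →L[ℂ] Kspace H :=
  (((WithLp.prodContinuousLinearEquiv 2 ℂ H H).symm : (H × H) →L[ℂ] Kspace H)) ∘L
    (((A ∘L ContinuousLinearMap.fst ℂ H H) + (B ∘L ContinuousLinearMap.snd ℂ H H)).prod
      ((C ∘L ContinuousLinearMap.fst ℂ H H) + (D ∘L ContinuousLinearMap.snd ℂ H H))) ∘L
    (((WithLp.prodContinuousLinearEquiv 2 ℂ H H) : Kspace H →L[ℂ] H × H))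

/-- The fundamental symmetry `J = [[1,0],[0,-1]]`. -/
def Jop (H : Type*) [NormedAddCommGroup H] [InnerProductSpace ℂ H] [CompleteSpace H] :
    Kspace H →L[ℂ] Kspace H :=
  blockOp 1 0 0 (-1)

/-!
The adjoint of a `J`-unitary operator is again `J`-unitary, so both identities for `D` are read off
from the lower right corner of `N* J N = J`, applied to `N` and to `N*`. They give `1 ≤ D* D` and
`1 ≤ D D*`, so `D` has a left and a right inverse. Conjugating `D D* = 1 + C C*` by `D⁻¹` shows that
`X = D⁻¹ C` satisfies `X X* = 1 - D⁻¹ (D⁻¹)*`. Hence `X X*` is a positive contraction and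
`1 - X X*` is invertible, so `1` is not in the spectrum of `X X*`, which contains `‖X X*‖ = ‖X‖²`.
-/

section Monoid

variable {M : Type*} [Monoid M]

theorem isUnit_of_isUnit_mul_of_isUnit_mul {a b c : M} (hab : IsUnit (a * b))
    (hbc : IsUnit (b * c)) : IsUnit b := by
  obtain ⟨l, hl⟩ := hab.exists_left_inv
  obtain ⟨r, hr⟩ := hbc.exists_right_inv
  exact isUnit_iff_exists_and_exists.2 ⟨⟨c * r, by rwa [← mul_assoc]⟩, ⟨l * a, by rwa [mul_assoc]⟩⟩

variable [StarMul M]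

/-- `N` is `J`-unitary: it is invertible and preserves the form `J`, that is `N* J N = J`. Stated
in any monoid with involution, so that it applies to bounded operators with `star` the adjoint. -/
structure IsJUnitary (J N : M) : Prop where
  isUnit : IsUnit N
  star_mul_mul : star N * J * N = J

protected theorem IsJUnitary.star {J N : M} (hN : IsJUnitary J N) (hJ : J * J = 1) :
    IsJUnitary J (star N) := by
  obtain ⟨⟨u, rfl⟩, hu⟩ := hN
  have inv_eq : (↑u⁻¹ : M) = J * star ↑u * J :=
    Units.inv_eq_of_mul_eq_one_left (by simpa only [mul_assoc, hJ] using congrArg (J * ·) hu)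
  refine ⟨u.isUnit.star, ?_⟩
  calc star (star (u : M)) * J * star ↑u = u * (J * star ↑u * J) * J := by
        simp only [star_star, mul_assoc, hJ, mul_one]
    _ = J := by rw [← inv_eq, Units.mul_inv, one_mul]

end Monoid

section StarRing

variable {R : Type*} [Ring R] [StarRing R]

theorem inv_mul_mul_star_inv_mul {d : Rˣ} {c : R} (h : (d : R) * star ↑d = 1 + c * star c) :
    (↑d⁻¹ * c) * star (↑d⁻¹ * c) = 1 - ↑d⁻¹ * star (↑d⁻¹ : R) := by
  have inv_star_cancel : star (d : R) * star (↑d⁻¹ : R) = 1 := by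
    rw [← star_mul, Units.inv_mul, star_one]
  calc (↑d⁻¹ * c) * star (↑d⁻¹ * c) = ↑d⁻¹ * (c * star c) * star (↑d⁻¹ : R) := by
        simp only [star_mul, mul_assoc]
    _ = (↑d⁻¹ * ↑d) * (star ↑d * star (↑d⁻¹ : R)) - ↑d⁻¹ * star (↑d⁻¹ : R) := by
        rw [eq_sub_of_add_eq' h.symm]; noncomm_ring
    _ = 1 - ↑d⁻¹ * star (↑d⁻¹ : R) := by rw [Units.inv_mul, inv_star_cancel, one_mul]

end StarRing

section CStarAlgebra

variable {A : Type*} [CStarAlgebra A] [PartialOrder A] [StarOrderedRing A]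

theorem isUnit_one_add_of_nonneg {a : A} (ha : 0 ≤ a) : IsUnit (1 + a) :=
  CStarAlgebra.isUnit_of_le 1 (le_add_of_nonneg_right ha)

theorem norm_le_one_of_mul_star_self_le_one {a : A} (h : a * star a ≤ 1) : ‖a‖ ≤ 1 := by
  have := (CStarAlgebra.norm_le_one_iff_of_nonneg _ (mul_star_self_nonneg a)).2 h
  rwa [CStarRing.norm_self_mul_star, ← sq, sq_le_one_iff₀ (norm_nonneg a)] at this

theorem norm_lt_one_of_isUnit_one_sub {a : A} (ha : 0 ≤ a) (ha_le : a ≤ 1)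
    (h : IsUnit (1 - a)) : ‖a‖ < 1 := by
  nontriviality A
  refine ((CStarAlgebra.norm_le_one_iff_of_nonneg a ha).2 ha_le).lt_of_ne fun norm_eq ↦ ?_
  have one_mem : (1 : ℝ) ∈ spectrum ℝ a := norm_eq ▸ CStarAlgebra.norm_mem_spectrum_of_nonneg ha
  exact spectrum.mem_iff.1 one_mem (by rwa [map_one])

theorem norm_lt_one_of_mul_star_self_eq_one_sub {x e : A} (he : IsUnit e)
    (h : x * star x = 1 - e * star e) : ‖x‖ < 1 := by
  have mul_star_le : x * star x ≤ 1 := h ▸ sub_le_self 1 (mul_star_self_nonneg e)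
  have isUnit_sub : IsUnit (1 - x * star x) := by
    rw [h, sub_sub_cancel]
    exact he.mul he.star
  have := norm_lt_one_of_isUnit_one_sub (mul_star_self_nonneg x) mul_star_le isUnit_sub
  rwa [CStarRing.norm_self_mul_star, ← sq, sq_lt_one_iff₀ (norm_nonneg x)] at this

end CStarAlgebra

section BlockOp

variable {E : Type*} [NormedAddCommGroup E] [InnerProductSpace ℂ E]

theorem blockOp_apply (A B C D : E →L[ℂ] E) (v : Kspace E) :
    blockOp A B C D v = WithLp.toLp 2 (A v.fst + B v.snd, C v.fst + D v.snd) :=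
  rfl

theorem blockOp_inj {A B C D A' B' C' D' : E →L[ℂ] E} :
    blockOp A B C D = blockOp A' B' C' D' ↔ A = A' ∧ B = B' ∧ C = C' ∧ D = D' := by
  refine ⟨fun h ↦ ?_, by rintro ⟨rfl, rfl, rfl, rfl⟩; rfl⟩
  have h_left (x : E) := DFunLike.congr_fun h (WithLp.toLp 2 (x, 0))
  have h_right (y : E) := DFunLike.congr_fun h (WithLp.toLp 2 (0, y))
  simp only [blockOp_apply, WithLp.toLp_fst, WithLp.toLp_snd, map_zero, add_zero, zero_add,
    WithLp.toLp.injEq, Prod.mk.injEq] at h_left h_right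
  simp [ContinuousLinearMap.ext_iff, h_left, h_right]

theorem blockOp_one_zero_zero_one : blockOp (1 : E →L[ℂ] E) 0 0 1 = 1 := by
  ext v
  simp only [blockOp_apply, one_apply_eq_self, zero_apply, add_zero, zero_add]
  rfl

theorem blockOp_mul (A B C D A' B' C' D' : E →L[ℂ] E) :
    blockOp A B C D * blockOp A' B' C' D' =
      blockOp (A * A' + B * C') (A * B' + B * D') (C * A' + D * C') (C * B' + D * D') := by
  ext v
  simp [blockOp_apply, add_add_add_comm]

variable [CompleteSpace E]

theorem star_blockOp (A B C D : E →L[ℂ] E) :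
    star (blockOp A B C D) = blockOp (star A) (star C) (star B) (star D) := by
  refine ((eq_adjoint_iff _ _).2 fun x y ↦ ?_).symm
  simp only [blockOp_apply, star_eq_adjoint, WithLp.prod_inner_apply, WithLp.ofLp_fst,
    WithLp.ofLp_snd, inner_add_left, inner_add_right, adjoint_inner_left]
  ring

theorem Jop_mul_self : Jop E * Jop E = 1 := by
  simp [Jop, blockOp_mul, blockOp_one_zero_zero_one]

theorem IsJUnitary.star_mul_self_eq_one_add {A B C D : E →L[ℂ] E}
    (h : IsJUnitary (Jop E) (blockOp A B C D)) : star D * D = 1 + star B * B := by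
  have corner : star B * B - star D * D = -1 := by
    have := h.star_mul_mul
    rw [star_blockOp, Jop, blockOp_mul, blockOp_mul, blockOp_inj] at this
    simpa [sub_eq_add_neg] using this.2.2.2
  rw [← sub_eq_iff_eq_add, ← neg_sub, corner, neg_neg]

theorem IsJUnitary.mul_star_self_eq_one_add {A B C D : E →L[ℂ] E}
    (h : IsJUnitary (Jop E) (blockOp A B C D)) : D * star D = 1 + C * star C := by
  have h_star := h.star Jop_mul_self
  rw [star_blockOp] at h_star
  simpa only [star_star] using h_star.star_mul_self_eq_one_add

end BlockOp

/-- If `N = [[A,B],[C,D]]` is `J`-unitary (i.e. invertible with `N* J N = J`), then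
`D*D = 1 + B*B`, `DD* = 1 + CC*`; consequently `D` is invertible with `‖D⁻¹‖ ≤ 1`,
`(D⁻¹C)(D⁻¹C)* = 1 − D⁻¹(D⁻¹)*`, and `‖D⁻¹C‖ < 1`. -/
theorem blockD_of_J_unitary (A B C D : H →L[ℂ] H)
    (hNinv : IsUnit (blockOp A B C D))
    (hNJ : adjoint (blockOp A B C D) ∘L Jop H ∘L blockOp A B C D = Jop H) :
    adjoint D ∘L D = 1 + adjoint B ∘L B ∧
    D ∘L adjoint D = 1 + C ∘L adjoint C ∧
    ∃ Dinv : H →L[ℂ] H, D ∘L Dinv = 1 ∧ Dinv ∘L D = 1 ∧ ‖Dinv‖ ≤ 1 ∧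
      (Dinv ∘L C) ∘L adjoint (Dinv ∘L C) = 1 - Dinv ∘L adjoint Dinv ∧
      ‖Dinv ∘L C‖ < 1 := by
  have hN : IsJUnitary (Jop H) (blockOp A B C D) := ⟨hNinv, hNJ⟩
  have hDstarD : star D * D = 1 + star B * B := hN.star_mul_self_eq_one_add
  have hDDstar : D * star D = 1 + C * star C := hN.mul_star_self_eq_one_add
  refine ⟨hDstarD, hDDstar, ?_⟩
  obtain ⟨d, rfl⟩ : IsUnit D := isUnit_of_isUnit_mul_of_isUnit_mul
    (hDstarD ▸ isUnit_one_add_of_nonneg (star_mul_self_nonneg B))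
    (hDDstar ▸ isUnit_one_add_of_nonneg (mul_star_self_nonneg C))
  have hX := inv_mul_mul_star_inv_mul hDDstar
  have hle : (↑d⁻¹ : H →L[ℂ] H) * star ↑d⁻¹ ≤ 1 := by
    rw [← sub_nonneg, ← hX]
    exact mul_star_self_nonneg _
  exact ⟨↑d⁻¹, d.mul_inv, d.inv_mul, norm_le_one_of_mul_star_self_le_one hle, hX,
    norm_lt_one_of_mul_star_self_eq_one_sub d⁻¹.isUnit hX⟩
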